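/- arXiv:2202.09008 — 7 statements merged into one kernel-verified Lean document; each statement's English description precedes it below -/
import Mathlib

section
/- For every 2k-element subset S^{2k} of {1,…,n} and every real-valued function g on k-element subsets of {1,…,n}, the following exact algebraic identities hold: ψ_k(S^{2k}) − ψ_0(S^{2k}) = ∑_{d=0}^{k} w_d · φ_d(S^{2k}), and, since ∑_{d=0}^{k} w_d = 0, this also equals ∑_{d=1}^{k} w_d · (φ_d(S^{2k}) − φ_0(S^{2k})). -/
/-!
Statement 6: the exact algebraic identities
`ψ_k(S^{2k}) - ψ_0(S^{2k}) = ∑_{d=0}^k w_d φ_d(S^{2k})`, `∑_{d=0}^k w_d = 0`, and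
`ψ_k(S^{2k}) - ψ_0(S^{2k}) = ∑_{d=1}^k w_d (φ_d(S^{2k}) - φ_0(S^{2k}))`.
-/

open Finset

noncomputable section

/-- `M_{d,k}`, the number of ordered pairs of `k`-subsets of a `2k`-set
with intersection of size `d`. -/
def Mdk (k d : ℕ) : ℕ :=
  (2 * k).choose d * (2 * k - d).choose d * (2 * k - 2 * d).choose (k - d)

/-- `N_d = C(n - 2k + d, d)`. -/
def Nd (n k d : ℕ) : ℕ := (n - 2 * k + d).choose d

/-- Sum of `g(S₁) g(S₂)` over ordered pairs of `k`-subsets of `S2k` with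
intersection of size `d`. -/
def pairSum (n k : ℕ) (g : Finset (Fin n) → ℝ) (d : ℕ) (S2k : Finset (Fin n)) : ℝ :=
  ∑ S₁ ∈ Finset.powersetCard k S2k, ∑ S₂ ∈ Finset.powersetCard k S2k,
    if (S₁ ∩ S₂).card = d then g S₁ * g S₂ else 0

/-- `φ_d(S^{2k})`. -/
def phiD (n k : ℕ) (g : Finset (Fin n) → ℝ) (d : ℕ) (S2k : Finset (Fin n)) : ℝ :=
  (Mdk k d : ℝ)⁻¹ * pairSum n k g d S2k

/-- `ψ_{k'}(S^{2k})`. -/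
def psiD (n k : ℕ) (g : Finset (Fin n) → ℝ) (k' : ℕ) (S2k : Finset (Fin n)) : ℝ :=
  (n.choose (2 * k) : ℝ) * (n.choose k : ℝ)⁻¹ * ((n - k + k').choose k : ℝ)⁻¹ *
    ∑ d ∈ Finset.range (k' + 1), (Nd n k d : ℝ)⁻¹ * pairSum n k g d S2k

/-- The weights `w_d`. -/
def wgt (n k d : ℕ) : ℝ :=
  if d = 0 then
    ((n.choose k : ℝ)⁻¹ - ((n - k).choose k : ℝ)⁻¹) * (n.choose k : ℝ)⁻¹ *
      (n.choose (2 * k) : ℝ) * ((2 * k).choose k : ℝ)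
  else
    (n.choose (2 * k) : ℝ) * ((n.choose k : ℝ)⁻¹) ^ 2 * (Mdk k d : ℝ) / (Nd n k d : ℝ)

open Nat in
lemma aux_term (m d e : ℕ) :
    ((2*(d+e)+m).choose (2 * (d+e)) : ℝ) * (Mdk (d+e) d : ℝ) =
      (Nd (2*(d+e)+m) (d+e) d : ℝ) * ((2*(d+e)+m).choose (d+e) : ℝ) *
        (((d+e).choose d : ℝ) * ((d+e+m).choose e : ℝ)) := by
  have h1 : ((2*(d+e)+m).choose (2 * (d+e)) : ℝ) = _ := Nat.cast_add_choose ℝ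
  have h2 : ((2*(d+e)).choose d : ℝ) = (2*(d+e))! / (d ! * (d+2*e)!) := by
    have := Nat.cast_add_choose ℝ (a := d) (b := d+2*e)
    rwa [show d + (d+2*e) = 2*(d+e) by ring] at this
  have h3 : ((2*(d+e)-d).choose d : ℝ) = (d+2*e)! / (d ! * (2*e)!) := by
    rw [show 2*(d+e)-d = d+2*e by omega]; exact Nat.cast_add_choose ℝ
  have h4 : ((2*(d+e)-2*d).choose (d+e-d) : ℝ) = (2*e)! / (e ! * e !) := by
    rw [show 2*(d+e)-2*d = e+e by omega, show d+e-d = e by omega, two_mul]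
    exact Nat.cast_add_choose ℝ
  have h5 : ((2*(d+e)+m-2*(d+e)+d).choose d : ℝ) = (d+m)! / (d ! * m !) := by
    rw [show 2*(d+e)+m-2*(d+e)+d = d+m by omega]; exact Nat.cast_add_choose ℝ
  have h6 : ((2*(d+e)+m).choose (d+e) : ℝ) = (2*(d+e)+m)! / ((d+e)! * (d+e+m)!) := by
    have := Nat.cast_add_choose ℝ (a := d+e) (b := d+e+m)
    rwa [show d+e + (d+e+m) = 2*(d+e)+m by ring] at this
  have h7 : ((d+e).choose d : ℝ) = _ := Nat.cast_add_choose ℝ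
  have h8 : ((d+e+m).choose e : ℝ) = (d+e+m)! / (e ! * (d+m)!) := by
    have := Nat.cast_add_choose ℝ (a := e) (b := d+m)
    rwa [show e+(d+m) = d+e+m by ring] at this
  unfold Mdk Nd
  rw [Nat.cast_mul, Nat.cast_mul, h1, h2, h3, h4, h5, h6, h7, h8]
  have hf : ∀ a : ℕ, (a ! : ℝ) ≠ 0 := fun a => by exact_mod_cast Nat.factorial_ne_zero a
  have f1 := hf (2*(d+e)+m)
  have f2 := hf (2*(d+e))
  have f3 := hf (d+2*e)
  have f4 := hf (2*e)
  have f5 := hf (d+m)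
  have f6 := hf (d+e)
  have f7 := hf (d+e+m)
  have f8 := hf d
  have f9 := hf e
  have f10 := hf m
  generalize ((2*(d+e)+m)! : ℝ) = a1 at *
  generalize ((2*(d+e))! : ℝ) = a2 at *
  generalize ((d+2*e)! : ℝ) = a3 at *
  generalize ((2*e)! : ℝ) = a4 at *
  generalize ((d+m)! : ℝ) = a5 at *
  generalize ((d+e+m)! : ℝ) = a7 at *
  generalize ((d+e)! : ℝ) = a6 at *
  generalize (d ! : ℝ) = a8 at *
  generalize (e ! : ℝ) = a9 at *
  generalize (m ! : ℝ) = a10 at *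
  field_simp

lemma Mdk_zero (k : ℕ) : Mdk k 0 = (2*k).choose k := by simp [Mdk]

lemma Nd_zero (n k : ℕ) : Nd n k 0 = 1 := by simp [Nd]

lemma Mdk_ne (k d : ℕ) (h : d ≤ k) : (Mdk k d : ℝ) ≠ 0 := by
  have : 0 < Mdk k d := by
    unfold Mdk
    have h1 := Nat.choose_pos (show d ≤ 2*k by omega)
    have h2 := Nat.choose_pos (show d ≤ 2*k-d by omega)
    have h3 := Nat.choose_pos (show k-d ≤ 2*k-2*d by omega)
    positivity
  exact_mod_cast this.ne'

lemma Nd_ne (n k d : ℕ) : (Nd n k d : ℝ) ≠ 0 := by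
  have : 0 < Nd n k d := Nat.choose_pos (by omega)
  exact_mod_cast this.ne'

lemma aux_sum (n k : ℕ) (hn : 2 * k ≤ n) :
    ∑ d ∈ Finset.range (k + 1), (n.choose (2*k) : ℝ) * (Mdk k d : ℝ) / (Nd n k d : ℝ)
      = (n.choose k : ℝ) ^ 2 := by
  have h : ∀ d ∈ Finset.range (k+1),
      (n.choose (2*k) : ℝ) * (Mdk k d : ℝ) / (Nd n k d : ℝ)
       = (n.choose k : ℝ) * ((k.choose d * (n-k).choose (k-d) : ℕ) : ℝ) := by
    intro d hd
    obtain ⟨e, rfl⟩ := Nat.exists_eq_add_of_le (show d ≤ k by simp at hd; omega)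
    obtain ⟨m, rfl⟩ := Nat.exists_eq_add_of_le hn
    rw [aux_term, div_eq_iff (Nd_ne _ _ _),
      show 2*(d+e)+m-(d+e) = d+e+m by omega, show d+e-d = e by omega]
    push_cast
    ring
  rw [Finset.sum_congr rfl h, ← Finset.mul_sum, ← Nat.cast_sum, sq]
  congr 2
  have := Nat.add_choose_eq k (n-k) k
  rw [Finset.Nat.sum_antidiagonal_eq_sum_range_succ_mk] at this
  rw [← this]
  congr 1
  omega

lemma aux_wgt (n k : ℕ) (hn : 2 * k ≤ n) :
    ∑ d ∈ Finset.range (k + 1), wgt n k d = 0 := by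
  have h := aux_sum n k hn
  have c1 : (n.choose k : ℝ) ≠ 0 := by
    exact_mod_cast (Nat.choose_pos (show k ≤ n by omega)).ne'
  have c2 : ((n-k).choose k : ℝ) ≠ 0 := by
    exact_mod_cast (Nat.choose_pos (show k ≤ n-k by omega)).ne'
  have c3 : (n.choose (2*k) : ℝ) * ((2*k).choose k : ℝ) = n.choose k * (n-k).choose k := by
    have := Nat.choose_mul (n := n) (show k ≤ 2*k by omega)
    rw [show 2*k-k = k by omega] at this
    exact_mod_cast this
  rw [Finset.sum_range_succ'] at h ⊢
  have h' : ∀ d ∈ Finset.range k, wgt n k (d+1) = ((n.choose k : ℝ)⁻¹)^2 *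
      ((n.choose (2*k) : ℝ) * (Mdk k (d+1) : ℝ) / (Nd n k (d+1) : ℝ)) := by
    intro d _
    simp only [wgt, Nat.succ_ne_zero, if_false]
    ring
  rw [Finset.sum_congr rfl h', ← Finset.mul_sum, eq_sub_of_add_eq h, Mdk_zero, Nd_zero]
  simp only [wgt, if_true, Nat.cast_one, div_one, c3]
  rw [mul_assoc _ (n.choose (2*k) : ℝ), c3]
  field_simp
  ring

theorem psi_eq_weighted_phi (n k : ℕ) (hk : 1 ≤ k) (hn : 2 * k ≤ n)
    (g : Finset (Fin n) → ℝ) (S2k : Finset (Fin n)) (hS : S2k.card = 2 * k) :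
    (psiD n k g k S2k - psiD n k g 0 S2k
        = ∑ d ∈ Finset.range (k + 1), wgt n k d * phiD n k g d S2k) ∧
    (∑ d ∈ Finset.range (k + 1), wgt n k d = 0) ∧
    (psiD n k g k S2k - psiD n k g 0 S2k
        = ∑ d ∈ Finset.Icc 1 k, wgt n k d * (phiD n k g d S2k - phiD n k g 0 S2k)) := by
  have key : psiD n k g k S2k - psiD n k g 0 S2k
        = ∑ d ∈ Finset.range (k + 1), wgt n k d * phiD n k g d S2k := by
    unfold psiD phiD
    rw [Finset.sum_range_succ', Finset.sum_range_succ', Finset.sum_range_succ', show n-k+k = n by omega]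
    simp only [zero_add, Finset.sum_range_zero, Nd_zero, Mdk_zero, add_zero]
    have h' : ∀ d ∈ Finset.range k,
        wgt n k (d+1) * ((Mdk k (d+1) : ℝ)⁻¹ * pairSum n k g (d+1) S2k) =
        (n.choose (2*k) : ℝ) * ((n.choose k : ℝ)⁻¹)^2 *
          ((Nd n k (d+1) : ℝ)⁻¹ * pairSum n k g (d+1) S2k) := by
      intro d hd
      have := Mdk_ne k (d+1) (by simp at hd; omega)
      have := Nd_ne n k (d+1)
      simp only [wgt, Nat.succ_ne_zero, if_false]
      field_simp
    have c : ((2*k).choose k : ℝ) ≠ 0 := by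
      exact_mod_cast (Nat.choose_pos (show k ≤ 2*k by omega)).ne'
    rw [Finset.sum_congr rfl h', ← Finset.mul_sum]
    have h0 : wgt n k 0 * (((2*k).choose k : ℝ)⁻¹ * pairSum n k g 0 S2k) =
        ((n.choose k : ℝ)⁻¹ - ((n - k).choose k : ℝ)⁻¹) * (n.choose k : ℝ)⁻¹ *
      (n.choose (2 * k) : ℝ) * pairSum n k g 0 S2k := by
      simp only [wgt, if_true]
      rw [mul_assoc _ ((2*k).choose k : ℝ), mul_inv_cancel_left₀ c]
    rw [h0]
    simp only [Nat.cast_one, inv_one]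
    ring
  have hw := aux_wgt n k hn
  refine ⟨key, hw, ?_⟩
  rw [key]
  have e : ∑ d ∈ Finset.range (k + 1), wgt n k d * phiD n k g d S2k =
      ∑ d ∈ Finset.range (k + 1), wgt n k d * (phiD n k g d S2k - phiD n k g 0 S2k) := by
    simp only [mul_sub, Finset.sum_sub_distrib, ← Finset.sum_mul, hw, zero_mul, sub_zero]
  rw [e, Finset.range_eq_Ico, Finset.sum_eq_sum_Ico_succ_bot (by omega)]
  simp only [sub_self, mul_zero, zero_add]
  rfl

end
end

section
/- For integers k ≥ 1 and n ≥ 2k, the weights satisfy ∑_{d=0}^{k} w_d = 0, with w_d > 0 for every 1 ≤ d ≤ k and w_0 < 0. Equivalently, the combinatorial identity ∑_{d=0}^{k} C(2k,d) C(2k−d,d) C(2k−2d,k−d) / C(n−2k+d,d) = C(n,k) C(2k,k) / C(n−k,k) holds. -/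
/-!
Statement 7: the weights satisfy `∑_{d=0}^k w_d = 0`, `w_d > 0` for `1 ≤ d ≤ k`,
`w_0 < 0`, and equivalently the combinatorial identity
`∑_{d=0}^k M_{d,k}/N_d = C(n,k) C(2k,k) / C(n-k,k)`.
-/

open Finset

noncomputable section

lemma Mdk_eq (k d : ℕ) (h : d ≤ k) : Mdk k d = (2 * k).choose k * k.choose d * k.choose d := by
  unfold Mdk
  have h1 := Nat.choose_mul (n := 2 * k) (k := k) (s := d) h
  have h2 := Nat.choose_mul (n := 2 * k - d) (k := k) (s := d) h
  have h3 : (2 * k - d).choose (k - d) = (2 * k - d).choose k :=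
    Nat.choose_symm_of_eq_add (by omega)
  have h4 : 2 * k - d - d = 2 * k - 2 * d := by omega
  rw [h4] at h2
  rw [h1, h3, mul_assoc, mul_assoc, h2]

lemma choose_cross (m k d : ℕ) (h : d ≤ k) :
    k.choose d * (m + k).choose k = (m + k).choose (k - d) * (m + d).choose d := by
  have h1 := Nat.choose_mul (n := m + k) (k := k) (s := k - d) (by omega)
  rw [Nat.choose_symm h, show m + k - (k - d) = m + d by omega,
    show k - (k - d) = d by omega] at h1
  rw [mul_comm, h1]

lemma vander (m k : ℕ) :
    ∑ d ∈ Finset.range (k + 1), k.choose d * (m + k).choose (k - d) = (m + 2 * k).choose k := by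
  rw [show m + 2 * k = k + (m + k) by ring, Nat.add_choose_eq,
    Finset.Nat.sum_antidiagonal_eq_sum_range_succ_mk]

lemma ident (n k : ℕ) (hn : 2 * k ≤ n) :
    ∑ d ∈ Finset.range (k + 1), (Mdk k d : ℝ) / (Nd n k d : ℝ)
        = (n.choose k : ℝ) * ((2 * k).choose k : ℝ) / ((n - k).choose k : ℝ) := by
  obtain ⟨m, rfl⟩ := Nat.exists_eq_add_of_le' hn
  have e : m + 2 * k - k = m + k := by omega
  have p : ((m + k).choose k : ℝ) ≠ 0 := by
    exact_mod_cast (Nat.choose_pos (by omega)).ne'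
  rw [e, ← vander, eq_div_iff p]
  push_cast
  rw [Finset.sum_mul, Finset.sum_mul]
  refine Finset.sum_congr rfl fun d hd => ?_
  have hd' : d ≤ k := by have := Finset.mem_range.1 hd; omega
  have q : ((m + d).choose d : ℝ) ≠ 0 := by
    exact_mod_cast (Nat.choose_pos (by omega)).ne'
  have c : (k.choose d : ℝ) * (m + k).choose k = (m + k).choose (k - d) * (m + d).choose d := by
    exact_mod_cast choose_cross m k d hd'
  rw [Mdk_eq k d hd', Nd, show m + 2 * k - 2 * k + d = m + d by omega, div_mul_eq_mul_div,
    div_eq_iff q]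
  push_cast
  linear_combination ((2 * k).choose k : ℝ) * k.choose d * c

theorem weights_sum_zero_and_signs (n k : ℕ) (hk : 1 ≤ k) (hn : 2 * k ≤ n) :
    (∑ d ∈ Finset.range (k + 1), wgt n k d = 0) ∧
    (∀ d ∈ Finset.Icc 1 k, 0 < wgt n k d) ∧
    (wgt n k 0 < 0) ∧
    (∑ d ∈ Finset.range (k + 1), (Mdk k d : ℝ) / (Nd n k d : ℝ)
        = (n.choose k : ℝ) * ((2 * k).choose k : ℝ) / ((n - k).choose k : ℝ)) := by
  have id := ident n k hn
  have a1 : (0 : ℝ) < n.choose (2 * k) := by exact_mod_cast Nat.choose_pos hn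
  have a2 : (0 : ℝ) < n.choose k := by exact_mod_cast Nat.choose_pos (by omega)
  have a3 : (0 : ℝ) < (n - k).choose k := by exact_mod_cast Nat.choose_pos (by omega)
  have a4 : (0 : ℝ) < (2 * k).choose k := by exact_mod_cast Nat.choose_pos (by omega)
  refine ⟨?_, ?_, ?_, id⟩
  · rw [Finset.sum_range_succ'] at id ⊢
    have s : ∑ d ∈ Finset.range k, wgt n k (d + 1) = (n.choose (2 * k) : ℝ) *
        ((n.choose k : ℝ)⁻¹) ^ 2 *
          ∑ d ∈ Finset.range k, (Mdk k (d + 1) : ℝ) / (Nd n k (d + 1) : ℝ) := by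
      rw [Finset.mul_sum]
      refine Finset.sum_congr rfl fun d _ => ?_
      simp [wgt, mul_div_assoc]
    have z : (Mdk k 0 : ℝ) / (Nd n k 0 : ℝ) = (2 * k).choose k := by simp [Mdk, Nd]
    rw [z] at id
    rw [s, eq_sub_of_add_eq id]
    simp only [wgt, if_true]
    field_simp
    ring
  · intro d hd
    obtain ⟨h1, h2⟩ := Finset.mem_Icc.1 hd
    have b1 : (0 : ℝ) < Mdk k d := by
      rw [Mdk_eq k d h2]
      have := Nat.choose_pos h2
      have := Nat.choose_pos (show k ≤ 2 * k by omega)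
      exact_mod_cast (by positivity)
    have b2 : (0 : ℝ) < Nd n k d := by
      unfold Nd
      exact_mod_cast Nat.choose_pos (by omega)
    rw [wgt, if_neg (by omega)]
    positivity
  · have lt : ((n - k).choose k : ℝ) < n.choose k := by
      norm_cast
      obtain ⟨j, rfl⟩ : ∃ j, k = j + 1 := ⟨k - 1, by omega⟩
      obtain ⟨r, rfl⟩ : ∃ r, n = r + 1 := ⟨n - 1, by omega⟩
      have h1 : (r + 1 - (j + 1)).choose (j + 1) ≤ r.choose (j + 1) :=
        Nat.choose_le_choose _ (by omega)
      have h2 : 0 < r.choose j := Nat.choose_pos (by omega)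
      rw [Nat.choose_succ_succ r j]
      show _ < r.choose j + r.choose (j + 1)
      omega
    have i := inv_strictAnti₀ a3 lt
    simp only [wgt, if_true]
    have : (n.choose k : ℝ)⁻¹ - ((n - k).choose k : ℝ)⁻¹ < 0 := by linarith
    have i2 := inv_pos.2 a2
    exact mul_neg_of_neg_of_pos (mul_neg_of_neg_of_pos (mul_neg_of_neg_of_pos this i2) a1) a4

end
end

section
/- For integers k ≥ 1, n ≥ 2k, and every 1 ≤ d ≤ k, the weight w_d satisfies the explicit bound w_d ≤ k^{2d} / (d! · (n−k+1)^d). (This is the explicit inequality established in the paper's proof of the bound w_d = O(k^{2d}/(d! n^d)).) -/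
/-!
Statement 8: for `1 ≤ d ≤ k` and `n ≥ 2k`, the weight `w_d` satisfies
`w_d ≤ k^{2d} / (d! (n-k+1)^d)`.
-/

open Finset

noncomputable section

theorem fact_shift (a b e : ℕ) (h : a ≤ b) :
    b.factorial * (a + e).factorial ≤ (b + e).factorial * a.factorial := by
  induction e with
  | zero => simp
  | succ e ih =>
    rw [← Nat.add_assoc, ← Nat.add_assoc, Nat.factorial_succ, Nat.factorial_succ]
    calc b.factorial * ((a + e + 1) * (a + e).factorial)
        = (a + e + 1) * (b.factorial * (a + e).factorial) := by ring
      _ ≤ (b + e + 1) * ((b + e).factorial * a.factorial) :=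
          Nat.mul_le_mul (by omega) ih
      _ = _ := by ring

theorem choose_eq_aux (a b c : ℕ) (h : c = a + b) :
    (c.choose a : ℝ) = (c.factorial : ℝ) / (a.factorial * b.factorial) := by
  subst h
  exact Nat.cast_add_choose ℝ

theorem wgt_eq_aux (m d e : ℕ) (hd : 1 ≤ d) :
    wgt (m + 2 * (d + e)) (d + e) d =
      (((m + d + e).factorial : ℝ) ^ 2 * ((d + e).factorial : ℝ) ^ 2) /
        ((m + 2 * (d + e)).factorial * (m + d).factorial * d.factorial *
          (e.factorial : ℝ) ^ 2) := by
  unfold wgt Mdk Nd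
  rw [if_neg (by omega)]
  push_cast
  rw [show 2 * (d + e) - 2 * d = 2 * e by omega, show d + e - d = e by omega,
    show m + 2 * (d + e) - 2 * (d + e) + d = m + d by omega,
    choose_eq_aux (2 * (d + e)) m _ (by omega),
    choose_eq_aux (d + e) (m + d + e) _ (by omega),
    choose_eq_aux d (2 * (d + e) - d) _ (by omega),
    choose_eq_aux d (2 * e) _ (by omega),
    choose_eq_aux e e _ (by omega),
    choose_eq_aux d m _ (by omega)]
  have hf : ∀ x : ℕ, (x.factorial : ℝ) ≠ 0 := fun x => by positivity
  have h1 := hf (2 * (d + e))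
  have h2 := hf m
  have h3 := hf (d + e)
  have h4 := hf (m + d + e)
  have h5 := hf d
  have h6 := hf (2 * (d + e) - d)
  have h7 := hf (2 * e)
  have h8 := hf e
  have h9 := hf (m + d)
  have h10 := hf (m + 2 * (d + e))
  field_simp

theorem weight_explicit_bound (n k : ℕ) (hk : 1 ≤ k) (hn : 2 * k ≤ n) :
    ∀ d, 1 ≤ d → d ≤ k →
      wgt n k d ≤ (k : ℝ) ^ (2 * d) / ((d.factorial : ℝ) * ((n : ℝ) - k + 1) ^ d) := by
  intro d hd hdk
  obtain ⟨e, rfl⟩ := Nat.exists_eq_add_of_le hdk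
  obtain ⟨m, rfl⟩ := Nat.exists_eq_add_of_le' hn
  rw [wgt_eq_aux m d e hd]
  have hcast : ((m + 2 * (d + e) : ℕ) : ℝ) - ((d + e : ℕ) : ℝ) + 1 =
      ((m + d + e + 1 : ℕ) : ℝ) := by
    push_cast; ring
  rw [hcast]
  have h1 : (d + e).factorial ≤ (d + e) ^ d * e.factorial := by
    have h := Nat.factorial_mul_descFactorial (n := d + e) (k := d) (by omega)
    rw [show d + e - d = e by omega] at h
    rw [← h, Nat.mul_comm]
    exact Nat.mul_le_mul_right _ (Nat.descFactorial_le_pow _ _)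
  have h2 : (m + d + e).factorial * (m + d + e + 1) ^ d ≤ (m + d + e + d).factorial :=
    Nat.factorial_mul_pow_le_factorial
  have h3 := fact_shift (m + d) (m + d + e + d) e (by omega)
  rw [show m + d + e + d + e = m + 2 * (d + e) by ring] at h3
  have h4 : (m + d + e).factorial ^ 2 * (m + d + e + 1) ^ d ≤
      (m + 2 * (d + e)).factorial * (m + d).factorial := by
    calc _ = (m + d + e).factorial * (m + d + e + 1) ^ d * (m + d + e).factorial := by ring
      _ ≤ _ := (Nat.mul_le_mul_right _ h2).trans h3
  have h5 := Nat.mul_le_mul_right d.factorial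
    (Nat.mul_le_mul h4 (Nat.pow_le_pow_left h1 2))
  rw [div_le_div_iff₀ (by positivity) (by positivity)]
  norm_cast
  calc _ = _ := by ring
    _ ≤ _ := h5
    _ = _ := by ring

end
end

section
/- For integers n, k, c with 1 ≤ c ≤ k ≤ n and n ≥ k+2, the hypergeometric coefficient satisfies C(n,k)^{-1} C(k,c) C(n−k,k−c) ≤ (1/c!) · (k² / (n−k−1))^c. -/
theorem hypergeometric_coeff_bound (n k c : ℕ)
    (hc : 1 ≤ c) (hck : c ≤ k) (hkn : k ≤ n) (hn : k + 2 ≤ n) :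
    (n.choose k : ℝ)⁻¹ * (k.choose c : ℝ) * ((n - k).choose (k - c) : ℝ)
      ≤ (1 / (c.factorial : ℝ)) * ((k : ℝ) ^ 2 / ((n : ℝ) - k - 1)) ^ c := by
  obtain ⟨m, hm⟩ : ∃ m, n = k + 1 + m := ⟨n - k - 1, by omega⟩
  have hm0 : 0 < m := by omega
  have hcast : (n : ℝ) - k - 1 = m := by rw [hm]; push_cast; ring
  have h1 : c.factorial * k.choose c ≤ k ^ c := by
    rw [← Nat.descFactorial_eq_factorial_mul_choose]
    exact Nat.descFactorial_le_pow k c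
  have h2 : m ^ c ≤ c.factorial * n.choose c := by
    rw [← Nat.descFactorial_eq_factorial_mul_choose]
    exact (Nat.pow_le_pow_left (by omega) c).trans (Nat.pow_sub_le_descFactorial n c)
  have h3 : (n - k).choose (k - c) ≤ (n - c).choose (k - c) :=
    Nat.choose_le_choose _ (by omega)
  have h4 : n.choose k * k.choose c = n.choose c * (n - c).choose (k - c) :=
    Nat.choose_mul hck
  have h5 : (n - k).choose (k - c) * m ^ c ≤ n.choose k * k ^ c :=
    calc (n - k).choose (k - c) * m ^ c
        ≤ (n - c).choose (k - c) * (c.factorial * n.choose c) := Nat.mul_le_mul h3 h2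
      _ = c.factorial * (n.choose c * (n - c).choose (k - c)) := by ring
      _ = n.choose k * (c.factorial * k.choose c) := by rw [← h4]; ring
      _ ≤ n.choose k * k ^ c := Nat.mul_le_mul_left _ h1
  have h6 := Nat.mul_le_mul h1 h5
  have h7 : (c.factorial * k.choose c * ((n - k).choose (k - c) * m ^ c) : ℝ)
      ≤ k ^ c * (n.choose k * k ^ c) := by exact_mod_cast h6
  have hN : (0 : ℝ) < n.choose k := by exact_mod_cast Nat.choose_pos hkn
  have hF : (0 : ℝ) < c.factorial := by exact_mod_cast c.factorial_pos
  have hM : (0 : ℝ) < (m : ℝ) ^ c := by positivity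
  rw [hcast, div_pow, mul_assoc, inv_mul_eq_div, div_mul_div_comm, one_mul,
    div_le_div_iff₀ hN (by positivity), ← pow_mul, mul_comm 2 c, pow_mul]
  linarith
end

section
/- For integers k ≥ 1, 0 ≤ d ≤ k, and nonnegative integers x₁, x₂ with x₁ ≤ k−d and x₂ ≤ k−d, the ratio of hypergeometric coefficients satisfies the sandwich inequality ((k−d+1−x₁)/(k−d+1))^d · ((k−d+1−x₂)/(k−d+1))^d ≤ [C(k−d,x₁) C(k−d,x₂)] / [C(k,x₁) C(k,x₂)] ≤ ((k−x₁)/k)^d · ((k−x₂)/k)^d. In particular the difference between the two hypergeometric probabilities p_{(x₀,x₁,x₂,d,c)} and p_{(x₀,x₁,x₂,0,c)} in the case x₁ + x₂ = c is O(1/k). -/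
/-!
Statement 14: sandwich inequality for the ratio of hypergeometric coefficients
`C(k-d,x₁) C(k-d,x₂) / (C(k,x₁) C(k,x₂))`, and the `O(1/k)` bound on the
difference of the two hypergeometric probabilities in the case `x₁ + x₂ = c`.
-/

open Filter

noncomputable section

/-- The hypergeometric probability `p_{(x₀,x₁,x₂,d,c)}`. -/
def hgProb (k d c x₀ x₁ x₂ : ℕ) : ℝ :=
  ((d.choose x₀ : ℝ) * ((k - d).choose x₁ : ℝ) * ((k - d).choose x₂ : ℝ) *
    (d.choose (c - x₀ - x₁ - x₂) : ℝ)) / ((2 * k).choose c : ℝ)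

theorem frac_mono (a b x : ℕ) (hx : x ≤ a) (hab : a ≤ b) :
    ((a : ℝ) - x) / a ≤ ((b : ℝ) - x) / b := by
  have hx' : (x : ℝ) ≤ a := by exact_mod_cast hx
  have hab' : (a : ℝ) ≤ b := by exact_mod_cast hab
  rcases Nat.eq_zero_or_pos a with h | h
  · subst h
    simp only [Nat.cast_zero, div_zero]
    exact div_nonneg (by linarith) (by positivity)
  · have ha : (0 : ℝ) < a := by exact_mod_cast h
    have hb : (0 : ℝ) < b := by linarith
    rw [div_le_div_iff₀ ha hb]
    have : (0 : ℝ) ≤ x := by positivity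
    nlinarith

theorem ratio_step (m d x : ℕ) (hx : x ≤ m) :
    (m.choose x : ℝ) / ((m + (d + 1)).choose x : ℝ) =
      (m.choose x : ℝ) / ((m + d).choose x : ℝ) *
        ((((m + (d + 1) : ℕ) : ℝ) - x) / ((m + (d + 1) : ℕ) : ℝ)) := by
  have h := Nat.choose_mul_succ_eq (m + d) x
  have h1 : (0 : ℝ) < ((m + d).choose x : ℝ) := by
    exact_mod_cast Nat.choose_pos (by omega)
  have h2 : (0 : ℝ) < ((m + (d + 1)).choose x : ℝ) := by
    exact_mod_cast Nat.choose_pos (by omega)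
  have h3 : (0 : ℝ) < ((m + (d + 1) : ℕ) : ℝ) := by exact_mod_cast (by omega)
  have h' : ((m + d).choose x : ℝ) * ((m + (d + 1) : ℕ) : ℝ) =
      ((m + (d + 1)).choose x : ℝ) * (((m + (d + 1) : ℕ) : ℝ) - x) := by
    rw [← Nat.cast_sub (by omega)]
    exact_mod_cast h
  rw [div_mul_div_comm, div_eq_div_iff h2.ne' (by positivity), h']
  ring

theorem ratio_bounds (m x : ℕ) (hx : x ≤ m) (d : ℕ) :
    ((((m + 1 : ℕ) : ℝ) - x) / ((m + 1 : ℕ) : ℝ)) ^ d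
        ≤ (m.choose x : ℝ) / ((m + d).choose x : ℝ) ∧
    (m.choose x : ℝ) / ((m + d).choose x : ℝ)
        ≤ ((((m + d : ℕ) : ℝ) - x) / ((m + d : ℕ) : ℝ)) ^ d := by
  have hnn : ∀ n : ℕ, x ≤ n → (0 : ℝ) ≤ ((n : ℝ) - x) / n := fun n hn =>
    div_nonneg (sub_nonneg.2 (by exact_mod_cast hn)) (by positivity)
  induction d with
  | zero =>
    have h1 : ((m).choose x : ℝ) ≠ 0 := by
      exact_mod_cast (Nat.choose_pos hx).ne'
    simp [h1]
  | succ d ih =>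
    rw [ratio_step m d x hx, pow_succ, pow_succ]
    constructor
    · exact mul_le_mul ih.1 (frac_mono _ _ x (by omega) (by omega))
        (hnn _ (by omega)) (by positivity)
    · refine mul_le_mul_of_nonneg_right (ih.2.trans ?_) (hnn _ (by omega))
      exact pow_le_pow_left₀ (hnn _ (by omega)) (frac_mono _ _ x (by omega) (by omega)) d

theorem frac_pow_bernoulli (m x d : ℕ) (hx : x ≤ m) :
    1 - (d : ℝ) * x / ((m + 1 : ℕ) : ℝ) ≤
      ((((m + 1 : ℕ) : ℝ) - x) / ((m + 1 : ℕ) : ℝ)) ^ d := by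
  have hm : (0 : ℝ) < ((m + 1 : ℕ) : ℝ) := by positivity
  have hxm : (x : ℝ) / ((m + 1 : ℕ) : ℝ) ≤ 1 := by
    rw [div_le_one hm]
    exact_mod_cast (by omega)
  have h := one_add_mul_le_pow (a := -((x : ℝ) / ((m + 1 : ℕ) : ℝ))) (by linarith) d
  have e : (((m + 1 : ℕ) : ℝ) - x) / ((m + 1 : ℕ) : ℝ) =
      1 + -((x : ℝ) / ((m + 1 : ℕ) : ℝ)) := by
    rw [sub_div, div_self hm.ne']; ring
  rw [e]
  refine le_trans (le_of_eq ?_) h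
  ring

theorem frac_pow_le_one (n x d : ℕ) (hx : x ≤ n) :
    (((n : ℝ) - x) / n) ^ d ≤ 1 := by
  have hx' : (x : ℝ) ≤ n := by exact_mod_cast hx
  refine pow_le_one₀ (div_nonneg (by linarith) (by positivity)) ?_
  exact div_le_one_of_le₀ (by simp) (by positivity)

theorem vandermonde_le (k a b : ℕ) :
    k.choose a * k.choose b ≤ (2 * k).choose (a + b) := by
  rw [two_mul, Nat.add_choose_eq]
  exact Finset.single_le_sum (f := fun ij : ℕ × ℕ => k.choose ij.1 * k.choose ij.2)
    (fun _ _ => Nat.zero_le _) (Finset.HasAntidiagonal.mem_antidiagonal.2 (rfl : (a, b).1 + (a, b).2 = a + b))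

theorem diff_bound (m d x₁ x₂ : ℕ) (h1 : x₁ ≤ m) (h2 : x₂ ≤ m) :
    |hgProb (m + d) d (x₁ + x₂) 0 x₁ x₂ - hgProb (m + d) 0 (x₁ + x₂) 0 x₁ x₂| ≤
      (d : ℝ) * (x₁ + x₂) / ((m + 1 : ℕ) : ℝ) := by
  obtain ⟨l1, u1⟩ := ratio_bounds m x₁ h1 d
  obtain ⟨l2, u2⟩ := ratio_bounds m x₂ h2 d
  replace u1 := u1.trans (frac_pow_le_one (m + d) x₁ d (by omega))
  replace u2 := u2.trans (frac_pow_le_one (m + d) x₂ d (by omega))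
  replace l1 := (frac_pow_bernoulli m x₁ d h1).trans l1
  replace l2 := (frac_pow_bernoulli m x₂ d h2).trans l2
  have hv : (((m + d).choose x₁ : ℝ) * ((m + d).choose x₂ : ℝ)) ≤
      ((2 * (m + d)).choose (x₁ + x₂) : ℝ) := by
    exact_mod_cast vandermonde_le (m + d) x₁ x₂
  have c1 : (0 : ℝ) < ((m + d).choose x₁ : ℝ) := by
    exact_mod_cast Nat.choose_pos (by omega)
  have c2 : (0 : ℝ) < ((m + d).choose x₂ : ℝ) := by
    exact_mod_cast Nat.choose_pos (by omega)
  set r1 := (m.choose x₁ : ℝ) / ((m + d).choose x₁ : ℝ) with hr1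
  set r2 := (m.choose x₂ : ℝ) / ((m + d).choose x₂ : ℝ) with hr2
  have r1n : 0 ≤ r1 := by positivity
  have r2n : 0 ≤ r2 := by positivity
  have e1 : (m.choose x₁ : ℝ) = r1 * ((m + d).choose x₁ : ℝ) := by
    rw [hr1]; field_simp
  have e2 : (m.choose x₂ : ℝ) = r2 * ((m + d).choose x₂ : ℝ) := by
    rw [hr2]; field_simp
  have hs : x₁ + x₂ - 0 - x₁ - x₂ = 0 := by omega
  unfold hgProb
  rw [hs, Nat.add_sub_cancel, e1, e2]
  simp only [Nat.choose_zero_right, Nat.cast_one, one_mul, mul_one, Nat.sub_zero]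
  set A := ((m + d).choose x₁ : ℝ)
  set B := ((m + d).choose x₂ : ℝ)
  set D := ((2 * (m + d)).choose (x₁ + x₂) : ℝ)
  have hD : 0 < D := lt_of_lt_of_le (by positivity) hv
  have p1 : A * B / D ≤ 1 := (div_le_one hD).2 hv
  have p0 : 0 ≤ A * B / D := by positivity
  have ee : r1 * A * (r2 * B) / D - A * B / D = -((A * B / D) * (1 - r1 * r2)) := by ring
  have q0 : 0 ≤ 1 - r1 * r2 := by nlinarith
  rw [ee, abs_neg, abs_of_nonneg (mul_nonneg p0 q0)]
  have hsum : (d : ℝ) * (x₁ + x₂) / ((m + 1 : ℕ) : ℝ) =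
      (d : ℝ) * x₁ / ((m + 1 : ℕ) : ℝ) + (d : ℝ) * x₂ / ((m + 1 : ℕ) : ℝ) := by ring
  rw [hsum]
  have q1 : 1 - r1 * r2 ≤ (1 - r1) + (1 - r2) := by nlinarith
  nlinarith

theorem hypergeometric_ratio_sandwich_and_difference
    (d x₁ x₂ c : ℕ) (hc : x₁ + x₂ = c) :
    (∀ k : ℕ, 1 ≤ k → d ≤ k → x₁ ≤ k - d → x₂ ≤ k - d →
      (((k : ℝ) - d + 1 - x₁) / ((k : ℝ) - d + 1)) ^ d *
          (((k : ℝ) - d + 1 - x₂) / ((k : ℝ) - d + 1)) ^ d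
        ≤ (((k - d).choose x₁ : ℝ) * ((k - d).choose x₂ : ℝ)) /
            ((k.choose x₁ : ℝ) * (k.choose x₂ : ℝ)) ∧
      (((k - d).choose x₁ : ℝ) * ((k - d).choose x₂ : ℝ)) /
            ((k.choose x₁ : ℝ) * (k.choose x₂ : ℝ))
        ≤ (((k : ℝ) - x₁) / (k : ℝ)) ^ d * (((k : ℝ) - x₂) / (k : ℝ)) ^ d) ∧
    (fun k : ℕ => hgProb k d c 0 x₁ x₂ - hgProb k 0 c 0 x₁ x₂)
      =O[atTop] fun k : ℕ => (1 : ℝ) / (k : ℝ) := by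
  subst hc
  constructor
  · intro k _ hd h1 h2
    obtain ⟨m, rfl⟩ : ∃ m, k = m + d := ⟨k - d, by omega⟩
    rw [Nat.add_sub_cancel] at *
    obtain ⟨l1, u1⟩ := ratio_bounds m x₁ h1 d
    obtain ⟨l2, u2⟩ := ratio_bounds m x₂ h2 d
    have hm : ((m + d : ℕ) : ℝ) - d + 1 = ((m + 1 : ℕ) : ℝ) := by push_cast; ring
    have hnn : ∀ n x : ℕ, x ≤ n → (0 : ℝ) ≤ ((n : ℝ) - x) / n := fun n x hn =>
      div_nonneg (sub_nonneg.2 (by exact_mod_cast hn)) (by positivity)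
    rw [hm, mul_div_mul_comm]
    exact ⟨mul_le_mul l1 l2 (pow_nonneg (hnn _ _ (by omega)) _) (by positivity),
      mul_le_mul u1 u2 (by positivity) (pow_nonneg (hnn _ _ (by omega)) _)⟩
  · refine Asymptotics.IsBigO.of_bound (2 * ((d : ℝ) * (x₁ + x₂))) ?_
    filter_upwards [eventually_ge_atTop (2 * d + x₁ + x₂ + 1)] with k hk
    obtain ⟨m, rfl⟩ : ∃ m, k = m + d := ⟨k - d, by omega⟩
    rw [Real.norm_eq_abs, Real.norm_eq_abs]
    refine (diff_bound m d x₁ x₂ (by omega) (by omega)).trans ?_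
    have hk0 : (0 : ℝ) < ((m + d : ℕ) : ℝ) := by exact_mod_cast (by omega)
    have hm0 : (0 : ℝ) < ((m + 1 : ℕ) : ℝ) := by positivity
    have hle : ((m + d : ℕ) : ℝ) ≤ 2 * ((m + 1 : ℕ) : ℝ) := by
      exact_mod_cast (by omega)
    rw [abs_of_pos (by positivity), mul_one_div, div_le_div_iff₀ hm0 hk0]
    have : (0 : ℝ) ≤ (d : ℝ) * (x₁ + x₂) := by positivity
    nlinarith

end
end

section
/- Let k ≥ 1 and let x_1,…,x_{2k} be real numbers, and define the order-k linear average kernel g(S) = k^{-1} ∑_{i∈S} x_i for k-element subsets S of {1,…,2k}. Then for every 0 ≤ d ≤ k, φ_d − φ_0 = (d/k²) · ( (1/(2k)) ∑_{i=1}^{2k} x_i² − (2/(2k(2k−1))) ∑_{1≤i<j≤2k} x_i x_j ), where φ_d is computed from g over the full set {1,…,2k}. -/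
/-!
Statement 15: for the order-`k` linear average kernel `g(S) = k⁻¹ ∑_{i∈S} xᵢ`
on `k`-element subsets of `{1,…,2k}`, for every `0 ≤ d ≤ k`,
`φ_d - φ_0 = (d/k²) ((1/(2k)) ∑ xᵢ² - (2/(2k(2k-1))) ∑_{i<j} xᵢ xⱼ)`.
-/

open Finset

noncomputable section

/-- `φ_d` computed from a function `g` on `k`-subsets of `{1,…,2k}`. -/
def phiLin (k : ℕ) (g : Finset (Fin (2 * k)) → ℝ) (d : ℕ) : ℝ :=
  (Mdk k d : ℝ)⁻¹ *
    ∑ S₁ ∈ Finset.powersetCard k (Finset.univ : Finset (Fin (2 * k))),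
      ∑ S₂ ∈ Finset.powersetCard k (Finset.univ : Finset (Fin (2 * k))),
        if (S₁ ∩ S₂).card = d then g S₁ * g S₂ else 0

/-- Pairs of `k`-subsets with intersection of size `d`. -/
def pairSet (k d : ℕ) : Finset (Finset (Fin (2 * k)) × Finset (Fin (2 * k))) :=
  (Finset.powersetCard k Finset.univ ×ˢ Finset.powersetCard k Finset.univ).filter
    (fun p => (p.1 ∩ p.2).card = d)

/-- Number of pairs with `i` in the first and `j` in the second set. -/
def pairCnt (k d : ℕ) (i j : Fin (2 * k)) : ℕ :=
  ((pairSet k d).filter (fun p => i ∈ p.1 ∧ j ∈ p.2)).card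

lemma mem_pairSet (k d : ℕ) (p : Finset (Fin (2 * k)) × Finset (Fin (2 * k))) :
    p ∈ pairSet k d ↔ (p.1.card = k ∧ p.2.card = k) ∧ (p.1 ∩ p.2).card = d := by
  simp [pairSet, Finset.mem_powersetCard]

lemma phiLin_eq (k d : ℕ) (g : Finset (Fin (2 * k)) → ℝ) :
    phiLin k g d = (Mdk k d : ℝ)⁻¹ * ∑ p ∈ pairSet k d, g p.1 * g p.2 := by
  rw [phiLin, pairSet, Finset.sum_filter, Finset.sum_product]

lemma card_second (k d : ℕ) (hd : d ≤ k) (S : Finset (Fin (2 * k))) (hS : S.card = k) :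
    ((Finset.powersetCard k Finset.univ).filter
      (fun T : Finset (Fin (2 * k)) => (S ∩ T).card = d)).card
      = k.choose d * k.choose (k - d) := by
  have hc : Sᶜ.card = k := by
    rw [Finset.card_compl, hS, Fintype.card_fin]; omega
  have h1 : (Finset.powersetCard d S ×ˢ Finset.powersetCard (k - d) Sᶜ).card
      = k.choose d * k.choose (k - d) := by
    rw [Finset.card_product, Finset.card_powersetCard, Finset.card_powersetCard, hS, hc]
  rw [← h1]
  refine Finset.card_nbij' (fun T => (S ∩ T, Sᶜ ∩ T)) (fun q => q.1 ∪ q.2) ?_ ?_ ?_ ?_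
  · intro T hT
    simp only [Finset.coe_filter, Finset.mem_powersetCard, Set.mem_ofPred_eq] at hT
    simp only [Finset.coe_product, Set.mem_prod, Finset.mem_coe, Finset.mem_powersetCard]
    refine ⟨⟨Finset.inter_subset_left, hT.2⟩, Finset.inter_subset_left, ?_⟩
    have h2 := Finset.card_inter_add_card_sdiff T S
    have h3 : Sᶜ ∩ T = T \ S := by ext a; simp [and_comm]
    rw [h3]
    rw [Finset.inter_comm] at h2
    omega
  · intro q hq
    simp only [Finset.coe_product, Set.mem_prod, Finset.mem_coe, Finset.mem_powersetCard] at hq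
    obtain ⟨⟨ha, hb⟩, hc1, hd1⟩ := hq
    simp only [Finset.coe_filter, Finset.mem_powersetCard, Set.mem_ofPred_eq]
    refine ⟨⟨Finset.subset_univ _, ?_⟩, ?_⟩
    · rw [Finset.card_union_of_disjoint]
      · omega
      · exact (disjoint_compl_right (a := S)).mono ha hc1
    · rw [← hb]; congr 1
      ext a
      have := @ha a
      have := @hc1 a
      simp only [Finset.mem_compl] at this
      simp only [Finset.mem_inter, Finset.mem_union]
      tauto
  · intro T hT
    ext a
    simp only [Finset.mem_inter, Finset.mem_union, Finset.mem_compl]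
    tauto
  · intro q hq
    simp only [Finset.coe_product, Set.mem_prod, Finset.mem_coe, Finset.mem_powersetCard] at hq
    obtain ⟨⟨ha, hb⟩, hc1, hd1⟩ := hq
    apply Prod.ext
    · ext a
      have := @ha a
      have := @hc1 a
      simp only [Finset.mem_compl] at this
      simp only [Finset.mem_inter, Finset.mem_union]
      tauto
    · ext a
      have := @ha a
      have := @hc1 a
      simp only [Finset.mem_compl] at this
      simp only [Finset.mem_inter, Finset.mem_union, Finset.mem_compl]
      tauto

lemma card_pairSet (k d : ℕ) (hd : d ≤ k) : (pairSet k d).card = Mdk k d := by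
  have h1 : (pairSet k d).card = (2 * k).choose k * (k.choose d * k.choose (k - d)) := by
    rw [pairSet, Finset.card_filter, Finset.sum_product]
    simp_rw [← Finset.card_filter]
    rw [Finset.sum_congr rfl (fun S hS => card_second k d hd S (Finset.mem_powersetCard.1 hS).2)]
    simp
  rw [h1, Mdk, ← mul_assoc, Nat.choose_mul hd, Nat.choose_symm hd, mul_assoc, mul_assoc]
  congr 1
  have h2 : (2 * k - d).choose (k - d) = (2 * k - d).choose k := by
    rw [← Nat.choose_symm (show k ≤ 2 * k - d by omega)]
    congr 1; omega
  rw [h2, Nat.choose_mul hd]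
  congr 2; omega

lemma Mdk_pos (k d : ℕ) (hd : d ≤ k) : 0 < Mdk k d := by
  unfold Mdk
  have h1 := Nat.choose_pos (show d ≤ 2 * k by omega)
  have h2 := Nat.choose_pos (show d ≤ 2 * k - d by omega)
  have h3 := Nat.choose_pos (show k - d ≤ 2 * k - 2 * d by omega)
  positivity

lemma sum_pairs (k d : ℕ) (x : Fin (2 * k) → ℝ) :
    ∑ p ∈ pairSet k d, (∑ i ∈ p.1, x i) * (∑ j ∈ p.2, x j)
      = ∑ i, ∑ j, (pairCnt k d i j : ℝ) * (x i * x j) := by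
  have h : ∀ p ∈ pairSet k d, (∑ i ∈ p.1, x i) * (∑ j ∈ p.2, x j)
      = ∑ i, ∑ j, if i ∈ p.1 ∧ j ∈ p.2 then x i * x j else 0 := by
    intro p _
    have h0 : ∀ S : Finset (Fin (2 * k)), ∑ i ∈ S, x i = ∑ i, if i ∈ S then x i else 0 := by
      intro S; simp
    rw [h0, h0, Finset.sum_mul_sum]
    refine Finset.sum_congr rfl fun i _ => Finset.sum_congr rfl fun j _ => ?_
    by_cases h1 : i ∈ p.1 <;> by_cases h2 : j ∈ p.2 <;> simp [h1, h2]
  rw [Finset.sum_congr rfl h, Finset.sum_comm]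
  refine Finset.sum_congr rfl fun i _ => ?_
  rw [Finset.sum_comm]
  refine Finset.sum_congr rfl fun j _ => ?_
  rw [← Finset.sum_filter, Finset.sum_const, nsmul_eq_mul, pairCnt]

lemma sum_diag (k d : ℕ) : ∑ i, pairCnt k d i i = (pairSet k d).card * d := by
  simp_rw [pairCnt, Finset.card_filter]
  rw [Finset.sum_comm]
  refine Finset.sum_const_nat fun p hp => ?_
  rw [← ((mem_pairSet k d p).1 hp).2, ← Finset.card_filter]
  congr 1; ext a; simp

lemma pairCnt_perm (k d : ℕ) (σ : Equiv.Perm (Fin (2 * k))) (i j : Fin (2 * k)) :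
    pairCnt k d (σ i) (σ j) = pairCnt k d i j := by
  symm
  unfold pairCnt
  refine Finset.card_nbij' (fun p => (p.1.map σ.toEmbedding, p.2.map σ.toEmbedding))
    (fun p => (p.1.map σ.symm.toEmbedding, p.2.map σ.symm.toEmbedding)) ?_ ?_ ?_ ?_
  · intro p hp
    simp only [Finset.coe_filter, mem_pairSet, Set.mem_ofPred_eq] at hp ⊢
    simpa [← Finset.map_inter] using hp
  · intro p hp
    simp only [Finset.coe_filter, mem_pairSet, Set.mem_ofPred_eq] at hp ⊢
    simpa [← Finset.map_inter] using hp
  · intro p hp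
    ext <;> simp
  · intro p hp
    ext <;> simp

lemma pairCnt_const (k d : ℕ) (hk : 1 ≤ k) :
    ∃ A B : ℕ, ∀ i j, pairCnt k d i j = if i = j then A else B := by
  let a : Fin (2 * k) := ⟨0, by omega⟩
  let b : Fin (2 * k) := ⟨1, by omega⟩
  have hab : a ≠ b := by simp [a, b]
  refine ⟨pairCnt k d a a, pairCnt k d a b, fun i j => ?_⟩
  split_ifs with h
  · subst h
    simpa using pairCnt_perm k d (Equiv.swap a i) a a
  · have h2 : MulAction.IsMultiplyPretransitive (Equiv.Perm (Fin (2 * k))) (Fin (2 * k)) 2 :=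
      Equiv.Perm.isMultiplyPretransitive _ 2
    obtain ⟨σ, h3, h4⟩ := (MulAction.is_two_pretransitive_iff.1 h2) hab h
    rw [← h3, ← h4]
    exact pairCnt_perm k d σ a b

lemma sum_split {n : ℕ} (A B : ℝ) (x : Fin n → ℝ) :
    ∑ i, ∑ j, (if i = j then A else B) * (x i * x j)
      = A * ∑ i, x i ^ 2 + 2 * B * ∑ i, ∑ j, if i < j then x i * x j else 0 := by
  have h : ∀ i j, (if i = j then A else B) * (x i * x j)
      = (if i = j then A * x i ^ 2 else 0) + B * (if i < j then x i * x j else 0)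
        + B * (if j < i then x j * x i else 0) := by
    intro i j
    rcases lt_trichotomy i j with h | h | h
    · simp [h, h.ne, h.not_gt]
    · subst h; simp only [if_true, lt_irrefl, if_false]; ring
    · simp [h, h.ne', h.not_gt, mul_comm]
  simp_rw [h, Finset.sum_add_distrib, ← Finset.mul_sum]
  rw [Finset.sum_comm (f := fun i j => if j < i then x j * x i else 0)]
  simp [← Finset.mul_sum]
  ring

lemma phi_formula (k d : ℕ) (hk : 1 ≤ k) (hd : d ≤ k) (x : Fin (2 * k) → ℝ) :
    phiLin k (fun S => (k : ℝ)⁻¹ * ∑ i ∈ S, x i) d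
      = ((k : ℝ) ^ 2)⁻¹ * ((d : ℝ) / (2 * k) * ∑ i, x i ^ 2
        + 2 * ((k : ℝ) ^ 2 - d) / (2 * k * (2 * k - 1)) *
          ∑ i, ∑ j, if i < j then x i * x j else 0) := by
  obtain ⟨A, B, hAB⟩ := pairCnt_const k d hk
  have hM : (0 : ℝ) < Mdk k d := by exact_mod_cast Mdk_pos k d hd
  have hk0 : (1 : ℝ) ≤ k := by exact_mod_cast hk
  have hA : (2 * k : ℝ) * A = Mdk k d * d := by
    have := sum_diag k d
    simp only [hAB, card_pairSet k d hd, if_true, Finset.sum_const, Finset.card_univ,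
      Fintype.card_fin, smul_eq_mul] at this
    exact_mod_cast this
  have hs : ∀ y : Fin (2 * k) → ℝ, ∑ i, ∑ j, (pairCnt k d i j : ℝ) * (y i * y j)
      = ∑ i, ∑ j, (if i = j then (A : ℝ) else B) * (y i * y j) := by
    intro y
    refine Finset.sum_congr rfl fun i _ => Finset.sum_congr rfl fun j _ => ?_
    rw [hAB]; push_cast; rfl
  have hB : (2 * k : ℝ) * (A + (2 * k - 1) * B) = Mdk k d * (k : ℝ) ^ 2 := by
    have h1 := sum_pairs k d (fun _ => 1)
    rw [hs] at h1
    have h2 : ∑ p ∈ pairSet k d, (∑ i ∈ p.1, (1 : ℝ)) * (∑ j ∈ p.2, (1 : ℝ))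
        = Mdk k d * (k : ℝ) ^ 2 := by
      rw [← card_pairSet k d hd, ← nsmul_eq_mul, ← Finset.sum_const]
      refine Finset.sum_congr rfl fun p hp => ?_
      have := ((mem_pairSet k d p).1 hp).1
      simp [this.1, this.2, sq]
    rw [h2] at h1
    rw [h1]
    have h3 : ∀ i j : Fin (2 * k), (if i = j then (A : ℝ) else B) * (1 * 1)
        = B + if i = j then (A - B : ℝ) else 0 := by
      intro i j; split_ifs <;> ring
    simp_rw [h3, Finset.sum_add_distrib]
    simp
    ring
  have hk1 : (2 * k - 1 : ℝ) ≠ 0 := by linarith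
  have hk2 : (k : ℝ) ≠ 0 := by linarith
  have hA' : (A : ℝ) = Mdk k d * d / (2 * k) := by field_simp; linarith
  have hB' : (B : ℝ) = Mdk k d * ((k : ℝ) ^ 2 - d) / (2 * k * (2 * k - 1)) := by
    rw [eq_div_iff (by positivity)]; linarith
  rw [phiLin_eq]
  have h5 : ∑ p ∈ pairSet k d, ((k : ℝ)⁻¹ * ∑ i ∈ p.1, x i) * ((k : ℝ)⁻¹ * ∑ i ∈ p.2, x i)
      = ((k : ℝ) ^ 2)⁻¹ * ∑ p ∈ pairSet k d, (∑ i ∈ p.1, x i) * (∑ i ∈ p.2, x i) := by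
    rw [Finset.mul_sum]
    refine Finset.sum_congr rfl fun p _ => ?_
    field_simp
  rw [h5, sum_pairs, hs, sum_split, hA', hB']
  have := hM.ne'
  field_simp

theorem linear_kernel_phi_difference (k : ℕ) (hk : 1 ≤ k) (x : Fin (2 * k) → ℝ) :
    ∀ d, d ≤ k →
      phiLin k (fun S => (k : ℝ)⁻¹ * ∑ i ∈ S, x i) d
          - phiLin k (fun S => (k : ℝ)⁻¹ * ∑ i ∈ S, x i) 0
        = ((d : ℝ) / (k : ℝ) ^ 2) *
            ((1 / (2 * (k : ℝ))) * ∑ i : Fin (2 * k), x i ^ 2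
              - (2 / ((2 * (k : ℝ)) * (2 * (k : ℝ) - 1))) *
                  ∑ i : Fin (2 * k), ∑ j : Fin (2 * k),
                    if i < j then x i * x j else 0) := by
  intro d hd
  rw [phi_formula k d hk hd, phi_formula k 0 hk (Nat.zero_le _)]
  have hk0 : (1 : ℝ) ≤ k := by exact_mod_cast hk
  have hk1 : (2 * k - 1 : ℝ) ≠ 0 := by linarith
  have hk2 : (k : ℝ) ≠ 0 := by linarith
  push_cast
  field_simp
  ring

end
end

section
/- Let k ≥ 1, M ≥ 2 and n ≥ Mk be integers, let h be any real-valued function on k-element subsets of {1,…,n}, and let U_n = C(n,k)^{-1} ∑_S h(S). Let G be the collection of all ordered M-tuples of pairwise disjoint k-element subsets of {1,…,n}. Then the deterministic identities V̂^(h) = σ_WP² and V̂^(h) − V̂^(S) = σ_WP²/M − σ_BP² hold; in particular, the proposed complete variance estimator coincides with the partition-based estimator of Wang and Lindsay (2014). -/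
/-!
Statement 19: for any real-valued function `h` on `k`-element subsets of
`{1,…,n}`, the deterministic identities `V̂^(h) = σ_WP²` and
`V̂^(h) - V̂^(S) = σ_WP²/M - σ_BP²` hold, i.e. the proposed complete variance
estimator coincides with the partition-based estimator of Wang–Lindsay (2014).
-/

open Finset

noncomputable section

/-- The complete U-statistic value. -/
def UstatD (n k : ℕ) (h : Finset (Fin n) → ℝ) : ℝ :=
  (n.choose k : ℝ)⁻¹ * ∑ S ∈ Finset.powersetCard k (Finset.univ : Finset (Fin n)), h S

/-- The sample-variance part `V̂^(S)`. -/
def VSD (n k : ℕ) (h : Finset (Fin n) → ℝ) : ℝ :=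
  (n.choose k : ℝ)⁻¹ *
    ∑ S ∈ Finset.powersetCard k (Finset.univ : Finset (Fin n)), (h S - UstatD n k h) ^ 2

/-- The tree-variance part `V̂^(h)` (over ordered pairs of disjoint `k`-subsets). -/
def VHD (n k : ℕ) (h : Finset (Fin n) → ℝ) : ℝ :=
  ((n.choose k : ℝ) * ((n - k).choose k : ℝ))⁻¹ *
    ∑ S₁ ∈ Finset.powersetCard k (Finset.univ : Finset (Fin n)),
      ∑ S₂ ∈ Finset.powersetCard k (Finset.univ : Finset (Fin n)),
        if S₁ ∩ S₂ = ∅ then (h S₁ - h S₂) ^ 2 / 2 else 0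

/-- The collection of matched groups: ordered `M`-tuples of pairwise disjoint
`k`-element subsets of `{1,…,n}`. -/
def groupSet (n k M : ℕ) : Finset (Fin M → Finset (Fin n)) :=
  Finset.univ.filter fun b => (∀ i, (b i).card = k) ∧ ∀ i j, i ≠ j → Disjoint (b i) (b j)

/-- The within-group mean `h̄^b`. -/
def groupMeanD (n k M : ℕ) (h : Finset (Fin n) → ℝ) (b : Fin M → Finset (Fin n)) : ℝ :=
  (M : ℝ)⁻¹ * ∑ i : Fin M, h (b i)

/-- The within-group variance `σ_WP²`. -/
def sigmaWP (n k M : ℕ) (h : Finset (Fin n) → ℝ) : ℝ :=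
  ((groupSet n k M).card : ℝ)⁻¹ *
    ∑ b ∈ groupSet n k M,
      ((M : ℝ) - 1)⁻¹ * ∑ i : Fin M, (h (b i) - groupMeanD n k M h b) ^ 2

/-- The between-group variance `σ_BP²`. -/
def sigmaBP (n k M : ℕ) (h : Finset (Fin n) → ℝ) : ℝ :=
  ((groupSet n k M).card : ℝ)⁻¹ *
    ∑ b ∈ groupSet n k M, (groupMeanD n k M h b - UstatD n k h) ^ 2

def disjPairs (n k : ℕ) : Finset (Finset (Fin n) × Finset (Fin n)) :=
  ((powersetCard k (univ : Finset (Fin n))) ×ˢ (powersetCard k (univ : Finset (Fin n)))).filter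
    fun p => p.1 ∩ p.2 = ∅

theorem exists_perm_pair (n k : ℕ) (p q : Finset (Fin n) × Finset (Fin n))
    (hp : p ∈ disjPairs n k) (hq : q ∈ disjPairs n k) :
    ∃ σ : Equiv.Perm (Fin n), p.1.map σ.toEmbedding = q.1 ∧ p.2.map σ.toEmbedding = q.2 := by
  classical
  obtain ⟨S, T⟩ := p
  obtain ⟨S', T'⟩ := q
  simp only [disjPairs, mem_filter, mem_product, mem_powersetCard, subset_univ, true_and] at hp hq
  obtain ⟨⟨hS, hT⟩, hd⟩ := hp
  obtain ⟨⟨hS', hT'⟩, hd'⟩ := hq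
  let c (A B : Finset (Fin n)) (x : Fin n) : Bool × Bool := (decide (x ∈ A), decide (x ∈ B))
  have key : ∀ A B : Finset (Fin n), A.card = k → B.card = k → A ∩ B = ∅ → ∀ z : Bool × Bool,
      Fintype.card {x // c A B x = z} =
        (match z with
          | (true, true) => 0
          | (true, false) => k
          | (false, true) => k
          | (false, false) => n - (k + k)) := by
    intro A B hA hB hAB z
    have hdis : Disjoint A B := disjoint_iff_inter_eq_empty.mpr hAB
    have hx : ∀ x, x ∈ A → x ∈ B → False := fun x h1 h2 => (Finset.disjoint_left.mp hdis h1 h2)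
    rw [Fintype.card_subtype]
    rcases z with ⟨z1, z2⟩
    cases z1 <;> cases z2 <;> simp only [c, Prod.mk.injEq, decide_eq_true_eq, decide_eq_false_iff_not]
    · have : (univ.filter fun x => x ∉ A ∧ x ∉ B) = (A ∪ B)ᶜ := by ext x; simp
      rw [this, card_compl, card_union_of_disjoint hdis, hA, hB, Fintype.card_fin]
    · have : (univ.filter fun x => x ∉ A ∧ x ∈ B) = B := by
        ext x; simp; intro h1 h2; exact hx x h2 h1
      rw [this, hB]
    · have : (univ.filter fun x => x ∈ A ∧ x ∉ B) = A := by
        ext x; simp; intro h1 h2; exact hx x h1 h2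
      rw [this, hA]
    · have : (univ.filter fun x => x ∈ A ∧ x ∈ B) = ∅ := by
        ext x; simp; intro h1 h2; exact hx x h1 h2
      rw [this, card_empty]
  have e : ∀ z, Nonempty ({x // c S T x = z} ≃ {x // c S' T' x = z}) := fun z =>
    ⟨Fintype.equivOfCardEq (by rw [key S T hS hT hd, key S' T' hS' hT' hd'])⟩
  let σ : Equiv.Perm (Fin n) := Equiv.ofFiberEquiv (fun z => (e z).some)
  have hσ : ∀ x, c S' T' (σ x) = c S T x := fun x => Equiv.ofFiberEquiv_map _ x
  have h1 : ∀ x, σ x ∈ S' ↔ x ∈ S := fun x => by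
    have := congrArg Prod.fst (hσ x); simpa [c] using this
  have h2 : ∀ x, σ x ∈ T' ↔ x ∈ T := fun x => by
    have := congrArg Prod.snd (hσ x); simpa [c] using this
  refine ⟨σ, ?_, ?_⟩
  · ext y
    rw [Finset.mem_map_equiv, ← h1, Equiv.apply_symm_apply]
  · ext y
    rw [Finset.mem_map_equiv, ← h2, Equiv.apply_symm_apply]

theorem groupSet_map {n k M : ℕ} (σ : Equiv.Perm (Fin n)) {b : Fin M → Finset (Fin n)}
    (hb : b ∈ groupSet n k M) : (fun i => (b i).map σ.toEmbedding) ∈ groupSet n k M := by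
  simp only [groupSet, mem_filter, mem_univ, true_and] at hb ⊢
  exact ⟨fun i => by rw [card_map]; exact hb.1 i,
    fun i j hij => (Finset.disjoint_map _).mpr (hb.2 i j hij)⟩

theorem fiber_le (n k M : ℕ) (i j : Fin M) (p q : Finset (Fin n) × Finset (Fin n))
    (hp : p ∈ disjPairs n k) (hq : q ∈ disjPairs n k) :
    ((groupSet n k M).filter fun b => (b i, b j) = p).card ≤
      ((groupSet n k M).filter fun b => (b i, b j) = q).card := by
  obtain ⟨σ, h1, h2⟩ := exists_perm_pair n k p q hp hq
  refine card_le_card_of_injOn (fun b i => (b i).map σ.toEmbedding) ?_ ?_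
  · intro b hb
    simp only [coe_filter, Set.mem_setOf_eq] at hb ⊢
    refine ⟨groupSet_map σ hb.1, ?_⟩
    have := hb.2
    subst this
    exact Prod.ext h1 h2
  · intro b _ b' _ hbb
    funext i
    exact Finset.map_injective _ (congrFun hbb i)

theorem sum_pair (n k M : ℕ) (i j : Fin M) (hij : i ≠ j)
    (f : Finset (Fin n) × Finset (Fin n) → ℝ) :
    ((disjPairs n k).card : ℝ) * ∑ b ∈ groupSet n k M, f (b i, b j) =
      ((groupSet n k M).card : ℝ) * ∑ p ∈ disjPairs n k, f p := by
  have hmaps : ∀ b ∈ groupSet n k M, (b i, b j) ∈ disjPairs n k := by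
    intro b hb
    simp only [groupSet, mem_filter, mem_univ, true_and] at hb
    simp only [disjPairs, mem_filter, mem_product, mem_powersetCard, subset_univ, true_and]
    exact ⟨⟨hb.1 i, hb.1 j⟩, disjoint_iff_inter_eq_empty.mp (hb.2 i j hij)⟩
  rcases (disjPairs n k).eq_empty_or_nonempty with h0 | ⟨q, hq⟩
  · simp [h0]
    
  set N := ((groupSet n k M).filter fun b => (b i, b j) = q).card with hN
  have hc : ∀ p ∈ disjPairs n k,
      ((groupSet n k M).filter fun b => (b i, b j) = p).card = N := fun p hp =>
    le_antisymm (fiber_le n k M i j p q hp hq) (fiber_le n k M i j q p hq hp)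
  have gen : ∀ f : Finset (Fin n) × Finset (Fin n) → ℝ,
      ∑ b ∈ groupSet n k M, f (b i, b j) = (N : ℝ) * ∑ p ∈ disjPairs n k, f p := by
    intro f
    rw [← sum_fiberwise_of_maps_to hmaps, mul_sum]
    refine sum_congr rfl fun p hp => ?_
    rw [← hc p hp, ← nsmul_eq_mul]
    apply sum_eq_card_nsmul
    intro b hb
    rw [(mem_filter.mp hb).2]
  have h1 := gen (fun _ => 1)
  simp only [sum_const, nsmul_eq_mul, mul_one] at h1
  rw [gen f, h1]
  ring

theorem inner_card (n k : ℕ) (S : Finset (Fin n)) (hS : S.card = k) :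
    ((powersetCard k (univ : Finset (Fin n))).filter fun T => S ∩ T = ∅).card
      = (n - k).choose k := by
  have : ((powersetCard k (univ : Finset (Fin n))).filter fun T => S ∩ T = ∅)
      = powersetCard k Sᶜ := by
    ext T
    simp only [mem_filter, mem_powersetCard, subset_univ, true_and,
      ← disjoint_iff_inter_eq_empty, subset_compl_iff_disjoint_right]
    rw [disjoint_comm, and_comm]
  rw [this, card_powersetCard, card_compl, Fintype.card_fin, hS]

theorem sum_disjPairs (n k : ℕ) (f : Finset (Fin n) → Finset (Fin n) → ℝ) :
    ∑ p ∈ disjPairs n k, f p.1 p.2 =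
      ∑ S₁ ∈ powersetCard k (univ : Finset (Fin n)),
        ∑ S₂ ∈ powersetCard k (univ : Finset (Fin n)),
          if S₁ ∩ S₂ = ∅ then f S₁ S₂ else 0 := by
  rw [disjPairs, sum_filter, sum_product]

theorem sum_disjPairs_fst (n k : ℕ) (f : Finset (Fin n) → ℝ) :
    ∑ p ∈ disjPairs n k, f p.1 =
      ((n - k).choose k : ℝ) * ∑ S ∈ powersetCard k (univ : Finset (Fin n)), f S := by
  rw [sum_disjPairs n k (fun S _ => f S), mul_sum]
  refine sum_congr rfl fun S hS => ?_
  rw [← sum_filter, sum_const, inner_card n k S (mem_powersetCard.mp hS).2, nsmul_eq_mul]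

theorem sum_disjPairs_snd (n k : ℕ) (f : Finset (Fin n) → ℝ) :
    ∑ p ∈ disjPairs n k, f p.2 =
      ((n - k).choose k : ℝ) * ∑ S ∈ powersetCard k (univ : Finset (Fin n)), f S := by
  rw [sum_disjPairs n k (fun _ S => f S), sum_comm, mul_sum]
  refine sum_congr rfl fun S hS => ?_
  simp_rw [inter_comm _ S]
  rw [← sum_filter, sum_const, inner_card n k S (mem_powersetCard.mp hS).2, nsmul_eq_mul]

theorem card_disjPairs (n k : ℕ) :
    ((disjPairs n k).card : ℝ) = (n.choose k : ℝ) * ((n - k).choose k : ℝ) := by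
  have := sum_disjPairs_fst n k (fun _ => 1)
  simp only [sum_const, nsmul_eq_mul, mul_one, card_powersetCard, card_univ,
    Fintype.card_fin] at this
  rw [this]; ring

theorem groupSet_nonempty (n k M : ℕ) (hMk : M * k ≤ n) : (groupSet n k M).Nonempty := by
  classical
  let g : Fin M × Fin k → Fin n := fun p => Fin.castLE hMk (finProdFinEquiv p)
  have hg : Function.Injective g := (Fin.castLE_injective hMk).comp finProdFinEquiv.injective
  refine ⟨fun i => univ.image fun x => g (i, x), ?_⟩
  simp only [groupSet, mem_filter, mem_univ, true_and]
  constructor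
  · intro i
    rw [card_image_of_injective]
    · simp
    · intro x y hxy
      exact (Prod.mk.inj (hg hxy)).2
  · intro i j hij
    rw [Finset.disjoint_left]
    intro y hy hy'
    simp only [mem_image, mem_univ, true_and] at hy hy'
    obtain ⟨a, rfl⟩ := hy
    obtain ⟨c, hc⟩ := hy'
    exact hij (Prod.mk.inj (hg hc)).1.symm

theorem complete_estimator_eq_partition_estimator
    (n k M : ℕ) (hk : 1 ≤ k) (hM : 2 ≤ M) (hMk : M * k ≤ n)
    (h : Finset (Fin n) → ℝ) :
    VHD n k h = sigmaWP n k M h ∧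
    VHD n k h - VSD n k h = sigmaWP n k M h / (M : ℝ) - sigmaBP n k M h := by
  have hM0 : (M : ℝ) ≠ 0 := by positivity
  have hM1 : (M : ℝ) - 1 ≠ 0 := by
    have : (2 : ℝ) ≤ M := by exact_mod_cast hM
    linarith
  have hkk : k + k ≤ n := by nlinarith
  have hc1 : (n.choose k : ℝ) ≠ 0 := by
    exact_mod_cast (Nat.choose_pos (by omega)).ne'
  have hc2 : ((n - k).choose k : ℝ) ≠ 0 := by
    exact_mod_cast (Nat.choose_pos (by omega)).ne'
  have hg : ((groupSet n k M).card : ℝ) ≠ 0 := by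
    exact_mod_cast (groupSet_nonempty n k M hMk).card_pos.ne'
  set g : ℝ := ((groupSet n k M).card : ℝ) with hgdef
  set A : ℝ := (n.choose k : ℝ) with hA
  set B : ℝ := ((n - k).choose k : ℝ) with hB
  set P := powersetCard k (univ : Finset (Fin n)) with hP
  have hPc : (P.card : ℝ) = A := by simp [hP, hA]
  set U := A⁻¹ * ∑ S ∈ P, h S with hU
  set Q := A⁻¹ * ∑ S ∈ P, h S ^ 2 with hQ
  set R := (A * B)⁻¹ * ∑ p ∈ disjPairs n k, h p.1 * h p.2 with hR
  have hUs : UstatD n k h = U := rfl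
  have hsU : ∑ S ∈ P, h S = A * U := by rw [hU]; field_simp
  have hsQ : ∑ S ∈ P, h S ^ 2 = A * Q := by rw [hQ]; field_simp
  have hsR : ∑ p ∈ disjPairs n k, h p.1 * h p.2 = A * B * R := by rw [hR]; field_simp
  have hVS : VSD n k h = Q - U ^ 2 := by
    have : ∑ S ∈ P, (h S - U) ^ 2 = A * Q - 2 * U * (A * U) + A * U ^ 2 := by
      rw [← hsQ, ← hsU, ← hPc, mul_sum, ← sum_sub_distrib, ← nsmul_eq_mul, ← sum_const,
        ← sum_add_distrib]
      exact sum_congr rfl fun S _ => by ring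
    rw [VSD, hUs, this]
    change A⁻¹ * _ = _
    field_simp
    ring
  have hVH : VHD n k h = Q - R := by
    have h1 := sum_disjPairs n k (fun S T => (h S - h T) ^ 2 / 2)
    rw [VHD, ← h1]
    have h2 : ∑ p ∈ disjPairs n k, (h p.1 - h p.2) ^ 2 / 2
        = (∑ p ∈ disjPairs n k, h p.1 ^ 2 + ∑ p ∈ disjPairs n k, h p.2 ^ 2) / 2
          - ∑ p ∈ disjPairs n k, h p.1 * h p.2 := by
      rw [← sum_add_distrib, sum_div, ← sum_sub_distrib]
      exact sum_congr rfl fun S _ => by ring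
    rw [h2, sum_disjPairs_fst n k (fun S => h S ^ 2), sum_disjPairs_snd n k (fun S => h S ^ 2),
      hsR]
    change (A * B)⁻¹ * ((B * ∑ S ∈ P, h S ^ 2 + B * ∑ S ∈ P, h S ^ 2) / 2 - A * B * R) = _
    rw [hsQ]
    field_simp
    ring
  have pair : ∀ i j : Fin M, i ≠ j → ∑ b ∈ groupSet n k M, h (b i) * h (b j) = g * R := by
    intro i j hij
    have h1 := sum_pair n k M i j hij (fun p => h p.1 * h p.2)
    rw [card_disjPairs] at h1
    change A * B * ∑ b ∈ groupSet n k M, h (b i) * h (b j) = g * _ at h1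
    rw [hsR] at h1
    apply mul_left_cancel₀ (mul_ne_zero hc1 hc2)
    rw [h1]; ring
  have single : ∀ (f : Finset (Fin n) → ℝ) (i : Fin M),
      A * ∑ b ∈ groupSet n k M, f (b i) = g * ∑ S ∈ P, f S := by
    intro f i
    have : Nontrivial (Fin M) := Fin.nontrivial_iff_two_le.mpr hM
    obtain ⟨j, hj⟩ := exists_ne i
    have h1 := sum_pair n k M i j hj.symm (fun p => f p.1)
    rw [card_disjPairs, sum_disjPairs_fst] at h1
    change A * B * ∑ b ∈ groupSet n k M, f (b i) = g * (B * ∑ S ∈ P, f S) at h1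
    apply mul_left_cancel₀ hc2
    linarith
  have sU : ∀ i : Fin M, ∑ b ∈ groupSet n k M, h (b i) = g * U := by
    intro i
    apply mul_left_cancel₀ hc1
    rw [single h i, hsU]; ring
  have sQ : ∀ i : Fin M, ∑ b ∈ groupSet n k M, h (b i) ^ 2 = g * Q := by
    intro i
    apply mul_left_cancel₀ hc1
    rw [single (fun S => h S ^ 2) i, hsQ]; ring
  have s1 : ∑ b ∈ groupSet n k M, groupMeanD n k M h b = g * U := by
    simp only [groupMeanD]
    rw [← mul_sum, sum_comm]
    simp only [sU, sum_const, card_univ, Fintype.card_fin, nsmul_eq_mul]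
    field_simp
  have s2 : ∑ b ∈ groupSet n k M, groupMeanD n k M h b ^ 2 = g * (Q + (M - 1) * R) / M := by
    have h1 : ∑ b ∈ groupSet n k M, (∑ i : Fin M, h (b i)) ^ 2
        = M * (g * (Q + (M - 1) * R)) := by
      simp only [sq, sum_mul_sum]
      rw [sum_comm]
      have : ∀ i : Fin M, ∑ b ∈ groupSet n k M, ∑ j : Fin M, h (b i) * h (b j)
          = g * (Q + (M - 1) * R) := by
        intro i
        rw [sum_comm, ← add_sum_erase _ _ (mem_univ i)]
        rw [sum_congr rfl (fun j hj => pair i j (ne_of_mem_erase hj).symm)]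
        have := sQ i
        simp only [sq] at this
        rw [this, sum_const, card_erase_of_mem (mem_univ i), card_univ, Fintype.card_fin,
          nsmul_eq_mul, Nat.cast_sub (by omega)]
        push_cast
        ring
      simp only [this, sum_const, card_univ, Fintype.card_fin, nsmul_eq_mul]
    simp only [groupMeanD, mul_pow]
    rw [← mul_sum, h1]
    field_simp
  have hBP : sigmaBP n k M h = (Q + (M - 1) * R) / M - U ^ 2 := by
    have : ∑ b ∈ groupSet n k M, (groupMeanD n k M h b - U) ^ 2
        = g * (Q + (M - 1) * R) / M - 2 * U * (g * U) + g * U ^ 2 := by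
      rw [← s2, ← s1, hgdef, mul_sum, ← sum_sub_distrib, ← nsmul_eq_mul, ← sum_const,
        ← sum_add_distrib]
      exact sum_congr rfl fun S _ => by ring
    rw [sigmaBP, hUs, this]
    change g⁻¹ * _ = _
    field_simp
    ring
  have hWP : sigmaWP n k M h = Q - R := by
    have h1 : ∀ b : Fin M → Finset (Fin n), ∑ i : Fin M, (h (b i) - groupMeanD n k M h b) ^ 2
        = ∑ i : Fin M, h (b i) ^ 2 - M * groupMeanD n k M h b ^ 2 := by
      intro b
      have hm : ∑ i : Fin M, h (b i) = M * groupMeanD n k M h b := by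
        rw [groupMeanD]; field_simp
      generalize groupMeanD n k M h b = m at hm ⊢
      have : ∑ i : Fin M, (h (b i) - m) ^ 2
          = ∑ i : Fin M, h (b i) ^ 2 - 2 * m * ∑ i : Fin M, h (b i) + ∑ _i : Fin M, m ^ 2 := by
        rw [mul_sum, ← sum_sub_distrib, ← sum_add_distrib]
        exact sum_congr rfl fun S _ => by ring
      rw [this, hm, sum_const, card_univ, Fintype.card_fin, nsmul_eq_mul]
      ring
    rw [sigmaWP]
    simp only [h1]
    rw [← mul_sum, sum_sub_distrib, ← mul_sum, s2, sum_comm]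
    simp only [sQ, sum_const, card_univ, Fintype.card_fin, nsmul_eq_mul]
    change g⁻¹ * _ = _
    field_simp
    ring
  refine ⟨by rw [hVH, hWP], ?_⟩
  rw [hVH, hVS, hWP, hBP]
  field_simp
  ring

end
end
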